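/- (The 20/60/20 Rule.) Let X ~ N_k(μ, Σ), α ∈ ℝ^k ∖ {0}, and Y := ⟨α, X⟩ with Var Y > 0. Then Cov[X | Y ∈ A₁] = Cov[X | Y ∈ A₂] = Cov[X | Y ∈ A₃], where A₁ := A(0, q̃), A₂ := A(q̃, 1−q̃), and A₃ := A(1−q̃, 1). -/

import Mathlib

open MeasureTheory ProbabilityTheory Filter Set

noncomputable section

/-- Covariance of two real random variables under the measure `m`. -/
def covar {Ω : Type*} [MeasurableSpace Ω] (m : Measure Ω) (f g : Ω → ℝ) : ℝ :=
  ∫ ω, (f ω - ∫ x, f x ∂m) * (g ω - ∫ x, g x ∂m) ∂m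

/-- Generalized inverse of the CDF of a measure on `ℝ`, `F⁻¹(p) = inf {y | F(y) ≥ p}`,
with values in `EReal` (`⊥` at `p = 0` and `⊤` at `p = 1` for fully supported laws). -/
def invCDF (μ : Measure ℝ) (p : ℝ) : EReal :=
  sInf ((fun x : ℝ => (x : EReal)) '' {x : ℝ | p ≤ cdf μ x})

/-- Quantile conditioning set `A(a,b) = {y : F⁻¹(a) < y < F⁻¹(b)}`. -/
def qSet (μ : Measure ℝ) (a b : ℝ) : Set ℝ :=
  {y : ℝ | invCDF μ a < (y : EReal) ∧ (y : EReal) < invCDF μ b}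

/-- The standard normal quantile function `Φ⁻¹(p) = inf {x | Φ(x) ≥ p}`. -/
def stdNormalQuantile (p : ℝ) : ℝ := sInf {x : ℝ | p ≤ cdf (gaussianReal 0 1) x}

/-! If `(X, Y)` is jointly Gaussian, the residual of a linear form of `X` after regression on `Y`
is independent of `Y`. Conditioning on `Y ∈ A` therefore changes the covariance of two linear forms
only by the multiple `Var[Y | A] - Var[Y]` of the product of their regression coefficients, so
everything depends on `A` through `Var[Y | A]` alone. For quantile sets this variance is, by
affine equivariance, `Var[Y]` times the one of the standard normal law; there the definition of
`q̃` equates the lower and the middle set, and the reflection `x ↦ -x` the lower and the upper one.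
-/

open scoped ENNReal NNReal Topology

section Conditioning

variable {Ω E F : Type*} {mΩ : MeasurableSpace Ω} {mE : MeasurableSpace E} {mF : MeasurableSpace F}
  {P : Measure Ω}

lemma memLp_cond {f : Ω → ℝ} {p : ℝ≥0∞} (hf : MemLp f p P) {s : Set Ω} (hs : P s ≠ 0) :
    MemLp f p P[|s] :=
  (hf.restrict s).smul_measure (ENNReal.inv_ne_top.2 hs)

lemma map_cond_preimage {Y : Ω → F} (hY : Measurable Y) {A : Set F} (hA : MeasurableSet A) :
    (P[|Y ⁻¹' A]).map Y = (P.map Y)[|A] := by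
  ext s hs
  rw [Measure.map_apply hY hs, cond_apply (hY hA), cond_apply hA, Measure.map_apply hY hA,
    Measure.map_apply hY (hA.inter hs), preimage_inter]

lemma variance_cond_preimage {Y : Ω → ℝ} (hY : Measurable Y) {A : Set ℝ} (hA : MeasurableSet A) :
    Var[Y; P[|Y ⁻¹' A]] = Var[id; (P.map Y)[|A]] := by
  rw [← map_cond_preimage hY hA, variance_id_map hY.aemeasurable]

lemma cond_preimage_inter_of_indepFun {U : Ω → E} {Y : Ω → F}
    (h : IndepFun U Y P) (hY : Measurable Y) {s : Set E} {A t : Set F} (hs : MeasurableSet s)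
    (hA : MeasurableSet A) (ht : MeasurableSet t) :
    P[|Y ⁻¹' A] (U ⁻¹' s ∩ Y ⁻¹' t) = P (U ⁻¹' s) * P[|Y ⁻¹' A] (Y ⁻¹' t) := by
  rw [cond_apply (hY hA), cond_apply (hY hA), inter_left_comm, ← preimage_inter,
    h.measure_inter_preimage_eq_mul _ _ hs (hA.inter ht), mul_left_comm]

lemma cond_preimage_of_indepFun [IsFiniteMeasure P] {U : Ω → E} {Y : Ω → F}
    (h : IndepFun U Y P) (hY : Measurable Y) {s : Set E} {A : Set F} (hs : MeasurableSet s)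
    (hA : MeasurableSet A) (hPA : P (Y ⁻¹' A) ≠ 0) :
    P[|Y ⁻¹' A] (U ⁻¹' s) = P (U ⁻¹' s) := by
  have := cond_isProbabilityMeasure hPA
  simpa only [preimage_univ, inter_univ, measure_univ, mul_one] using
    cond_preimage_inter_of_indepFun h hY hs hA .univ

lemma map_cond_preimage_of_indepFun [IsFiniteMeasure P] {U : Ω → E} {Y : Ω → F}
    (h : IndepFun U Y P) (hU : AEMeasurable U P) (hY : Measurable Y) {A : Set F}
    (hA : MeasurableSet A) (hPA : P (Y ⁻¹' A) ≠ 0) :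
    (P[|Y ⁻¹' A]).map U = P.map U := by
  ext s hs
  rw [Measure.map_apply_of_aemeasurable (hU.mono_ac cond_absolutelyContinuous) hs,
    Measure.map_apply_of_aemeasurable hU hs, cond_preimage_of_indepFun h hY hs hA hPA]

lemma indepFun_cond_preimage [IsFiniteMeasure P] {U : Ω → E} {Y : Ω → F} (h : IndepFun U Y P)
    (hY : Measurable Y) {A : Set F} (hA : MeasurableSet A) (hPA : P (Y ⁻¹' A) ≠ 0) :
    IndepFun U Y P[|Y ⁻¹' A] := by
  refine indepFun_iff_measure_inter_preimage_eq_mul.2 fun s t hs ht ↦ ?_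
  rw [cond_preimage_inter_of_indepFun h hY hs hA ht, cond_preimage_of_indepFun h hY hs hA hPA]

lemma variance_add_smul_cond_preimage_of_indepFun [IsFiniteMeasure P] {U Y : Ω → ℝ}
    (h : IndepFun U Y P) (hU : MemLp U 2 P) (hY : MemLp Y 2 P) (hYm : Measurable Y) (b : ℝ)
    {A : Set ℝ} (hA : MeasurableSet A) (hPA : P (Y ⁻¹' A) ≠ 0) :
    Var[U + b • Y; P[|Y ⁻¹' A]] = Var[U; P] + b ^ 2 * Var[Y; P[|Y ⁻¹' A]] := by
  have hind : IndepFun U (b • Y) P[|Y ⁻¹' A] :=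
    (indepFun_cond_preimage h hYm hA hPA).comp measurable_id (measurable_const_mul b)
  have hvarU : Var[U; P[|Y ⁻¹' A]] = Var[U; P] := by
    rw [← variance_id_map (hU.aemeasurable.mono_ac cond_absolutelyContinuous),
      map_cond_preimage_of_indepFun h hU.aemeasurable hYm hA hPA, variance_id_map hU.aemeasurable]
  rw [hind.variance_add (memLp_cond hU hPA) ((memLp_cond hY hPA).const_smul b), hvarU,
    variance_smul]

end Conditioning

section GaussianConditioning

variable {Ω E : Type*} {mΩ : MeasurableSpace Ω} {P : Measure Ω} {Y : Ω → ℝ}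

lemma indepFun_sub_regression {f : Ω → ℝ} (hfY : HasGaussianLaw (fun ω ↦ (f ω, Y ω)) P)
    (hVar : Var[Y; P] ≠ 0) : IndepFun (f - (cov[f, Y; P] / Var[Y; P]) • Y) Y P := by
  have := hfY.isProbabilityMeasure
  set b := cov[f, Y; P] / Var[Y; P]
  have hresidual : HasGaussianLaw (fun ω ↦ ((f - b • Y) ω, Y ω)) P :=
    hfY.map_fun ((ContinuousLinearMap.fst ℝ ℝ ℝ - b • ContinuousLinearMap.snd ℝ ℝ ℝ).prod
      (ContinuousLinearMap.snd ℝ ℝ ℝ))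
  refine hresidual.indepFun_of_covariance_eq_zero ?_
  have hY := hfY.snd.memLp_two
  rw [covariance_sub_left hfY.fst.memLp_two (hY.const_smul b) hY, covariance_smul_left,
    covariance_self hY.aemeasurable, div_mul_cancel₀ _ hVar, sub_self]

lemma variance_cond_preimage_of_hasGaussianLaw {f : Ω → ℝ}
    (hfY : HasGaussianLaw (fun ω ↦ (f ω, Y ω)) P) (hY : Measurable Y) (hVar : Var[Y; P] ≠ 0)
    {A : Set ℝ} (hA : MeasurableSet A) (hPA : P (Y ⁻¹' A) ≠ 0) :
    Var[f; P[|Y ⁻¹' A]] = Var[f; P]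
      + (cov[f, Y; P] / Var[Y; P]) ^ 2 * (Var[Y; P[|Y ⁻¹' A]] - Var[Y; P]) := by
  have := hfY.isProbabilityMeasure
  set b := cov[f, Y; P] / Var[Y; P]
  have hind : IndepFun (f - b • Y) Y P := indepFun_sub_regression hfY hVar
  have hY2 : MemLp Y 2 P := hfY.snd.memLp_two
  have hU2 : MemLp (f - b • Y) 2 P := hfY.fst.memLp_two.sub (hY2.const_smul b)
  have hdecomp {B : Set ℝ} (hB : MeasurableSet B) (hPB : P (Y ⁻¹' B) ≠ 0) :
      Var[f; P[|Y ⁻¹' B]] = Var[f - b • Y; P] + b ^ 2 * Var[Y; P[|Y ⁻¹' B]] := by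
    simpa only [sub_add_cancel] using
      variance_add_smul_cond_preimage_of_indepFun hind hU2 hY2 hY b hB hPB
  have huncond : Var[f; P] = Var[f - b • Y; P] + b ^ 2 * Var[Y; P] := by
    simpa only [preimage_univ, cond_univ] using
      hdecomp .univ (by simp)
  linear_combination hdecomp hA hPA - huncond

variable [NormedAddCommGroup E] [NormedSpace ℝ E] [MeasurableSpace E] [BorelSpace E] {X : Ω → E}

lemma covariance_cond_preimage_of_hasGaussianLaw (hXY : HasGaussianLaw (fun ω ↦ (X ω, Y ω)) P)
    (hY : Measurable Y) (hVar : Var[Y; P] ≠ 0) {A : Set ℝ} (hA : MeasurableSet A)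
    (hPA : P (Y ⁻¹' A) ≠ 0) (L₁ L₂ : StrongDual ℝ E) :
    cov[L₁ ∘ X, L₂ ∘ X; P[|Y ⁻¹' A]] = cov[L₁ ∘ X, L₂ ∘ X; P]
      + cov[L₁ ∘ X, Y; P] / Var[Y; P] * (cov[L₂ ∘ X, Y; P] / Var[Y; P])
        * (Var[Y; P[|Y ⁻¹' A]] - Var[Y; P]) := by
  have := hXY.isProbabilityMeasure
  have := cond_isProbabilityMeasure hPA
  have hLY (L : StrongDual ℝ E) : HasGaussianLaw (fun ω ↦ ((L ∘ X) ω, Y ω)) P :=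
    hXY.map_fun (L.prodMap (ContinuousLinearMap.id ℝ ℝ))
  have hvar (L : StrongDual ℝ E) :=
    variance_cond_preimage_of_hasGaussianLaw (hLY L) hY hVar hA hPA
  have hL (L : StrongDual ℝ E) : MemLp (L ∘ X) 2 P := (hXY.fst.map L).memLp_two
  have hsum : ⇑(L₁ + L₂) ∘ X = L₁ ∘ X + L₂ ∘ X := rfl
  -- Polarization: the variance formula for `L₁`, `L₂` and `L₁ + L₂` gives the covariance formula.
  have hcond := variance_add (memLp_cond (hL L₁) hPA) (memLp_cond (hL L₂) hPA)
  have huncond := variance_add (hL L₁) (hL L₂)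
  have hcovY := covariance_add_left (hL L₁) (hL L₂) hXY.snd.memLp_two
  have hvar_sum := hvar (L₁ + L₂)
  rw [hsum, hcond, huncond, hcovY, hvar L₁, hvar L₂] at hvar_sum
  linear_combination hvar_sum / 2

end GaussianConditioning

section Quantiles

variable (ν : Measure ℝ)

lemma strictMono_cdf [IsProbabilityMeasure ν] [ν.IsOpenPosMeasure] : StrictMono (cdf ν) := by
  intro x y hxy
  have hpos : 0 < ν (Ioc x y) :=
    (isOpen_Ioo.measure_pos ν (nonempty_Ioo.2 hxy)).trans_le (measure_mono Ioo_subset_Ioc_self)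
  rwa [← measure_cdf ν, StieltjesFunction.measure_Ioc, ENNReal.ofReal_pos, sub_pos] at hpos

lemma continuous_cdf [IsProbabilityMeasure ν] [NullSingletonClass ν] : Continuous (cdf ν) := by
  refine continuous_iff_continuousAt.2 fun x ↦
    (monotone_cdf ν).continuousAt_iff_leftLim_eq_rightLim.2 ?_
  have hjump : cdf ν x - Function.leftLim (cdf ν) x ≤ 0 := by
    rw [← ENNReal.ofReal_eq_zero, ← StieltjesFunction.measure_singleton, measure_cdf,
      measure_singleton]
  rw [StieltjesFunction.rightLim_eq]
  exact ((monotone_cdf ν).leftLim_le le_rfl).antisymm (sub_nonpos.1 hjump)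

lemma cdf_pos [IsProbabilityMeasure ν] [ν.IsOpenPosMeasure] (x : ℝ) : 0 < cdf ν x :=
  (cdf_nonneg ν (x - 1)).trans_lt (strictMono_cdf ν (sub_one_lt x))

lemma exists_cdf_eq [IsProbabilityMeasure ν] [NullSingletonClass ν] {p : ℝ}
    (hp : p ∈ Ioo (0 : ℝ) 1) : ∃ x, cdf ν x = p :=
  mem_range_of_exists_le_of_exists_ge (continuous_cdf ν)
    (((tendsto_cdf_atBot ν).eventually_lt_const hp.1).exists.imp fun _ ↦ le_of_lt)
    (((tendsto_cdf_atTop ν).eventually_const_lt hp.2).exists.imp fun _ ↦ le_of_lt)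

lemma cdf_map_apply_of_strictMono [IsProbabilityMeasure ν] {e : ℝ → ℝ} (he : StrictMono e)
    (x : ℝ) : cdf (ν.map e) (e x) = cdf ν x := by
  have hmeas := he.monotone.measurable
  have := Measure.isProbabilityMeasure_map (μ := ν) hmeas.aemeasurable
  have hpre : e ⁻¹' Iic (e x) = Iic x := Set.ext fun _ ↦ he.le_iff_le
  rw [cdf_eq_real, cdf_eq_real, map_measureReal_apply hmeas measurableSet_Iic, hpre]

lemma cdf_neg [IsProbabilityMeasure ν] [NullSingletonClass ν] [ν.IsNegInvariant] (x : ℝ) :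
    cdf ν (-x) = 1 - cdf ν x := by
  rw [cdf_eq_real, cdf_eq_real, ← probReal_compl_eq_one_sub measurableSet_Iic, compl_Iic,
    measureReal_congr Ioi_ae_eq_Ici, measureReal_def, measureReal_def, ← Measure.measure_neg,
    neg_Iic, neg_neg]

lemma coe_lt_invCDF_iff (p y : ℝ) : (y : EReal) < invCDF ν p ↔ cdf ν y < p := by
  refine ⟨fun h ↦ lt_of_not_ge fun hp ↦ h.not_ge (sInf_le ⟨y, hp, rfl⟩), fun h ↦ ?_⟩
  have hright : Tendsto (cdf ν) (𝓝[>] y) (𝓝 (cdf ν y)) :=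
    ((cdf ν).right_continuous y).mono Ioi_subset_Ici_self
  obtain ⟨z, hz, hyz⟩ := ((hright.eventually_lt_const h).and self_mem_nhdsWithin).exists
  refine (EReal.coe_lt_coe hyz).trans_le (le_sInf ?_)
  rintro _ ⟨x, hx, rfl⟩
  exact EReal.coe_le_coe ((monotone_cdf ν).reflect_lt (hz.trans_le hx)).le

variable [IsProbabilityMeasure ν] [NullSingletonClass ν] [ν.IsOpenPosMeasure]

lemma invCDF_lt_coe_iff (p y : ℝ) : invCDF ν p < (y : EReal) ↔ p < cdf ν y := by
  rw [invCDF, sInf_lt_iff]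
  constructor
  · rintro ⟨_, ⟨x, hx, rfl⟩, hxy⟩
    exact (show p ≤ cdf ν x from hx).trans_lt (strictMono_cdf ν (EReal.coe_lt_coe_iff.1 hxy))
  · intro h
    have hleft : Tendsto (cdf ν) (𝓝[<] y) (𝓝 (cdf ν y)) :=
      (continuous_cdf ν).continuousWithinAt
    obtain ⟨x, hx, hxy⟩ := ((hleft.eventually_const_lt h).and self_mem_nhdsWithin).exists
    exact ⟨x, ⟨x, hx.le, rfl⟩, EReal.coe_lt_coe hxy⟩

lemma qSet_eq_preimage_cdf (a b : ℝ) : qSet ν a b = cdf ν ⁻¹' Ioo a b :=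
  Set.ext fun y ↦ and_congr (invCDF_lt_coe_iff ν a y) (coe_lt_invCDF_iff ν b y)

lemma isOpen_qSet (a b : ℝ) : IsOpen (qSet ν a b) := by
  rw [qSet_eq_preimage_cdf]
  exact isOpen_Ioo.preimage (continuous_cdf ν)

lemma measure_qSet_ne_zero {a b : ℝ} (ha : 0 ≤ a) (hab : a < b) (hb : b ≤ 1) :
    ν (qSet ν a b) ≠ 0 := by
  obtain ⟨p, hp⟩ := nonempty_Ioo.2 hab
  obtain ⟨x, rfl⟩ := exists_cdf_eq ν (Ioo_subset_Ioo ha hb hp)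
  exact (isOpen_qSet ν a b).measure_ne_zero ν ⟨x, by rwa [qSet_eq_preimage_cdf]⟩

end Quantiles

/-- The variance of the law `ν` truncated to the values strictly between its `a`- and
`b`-quantiles. -/
def quantileVariance (ν : Measure ℝ) (a b : ℝ) : ℝ := Var[id; ν[|qSet ν a b]]

lemma quantileVariance_one_sub (ν : Measure ℝ) [IsProbabilityMeasure ν] [NullSingletonClass ν]
    [ν.IsOpenPosMeasure] [ν.IsNegInvariant] (a b : ℝ) :
    quantileVariance ν (1 - b) (1 - a) = quantileVariance ν a b := by
  have hpre : Neg.neg ⁻¹' qSet ν a b = qSet ν (1 - b) (1 - a) := by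
    ext x
    simp only [qSet_eq_preimage_cdf, mem_preimage, cdf_neg, mem_Ioo]
    constructor <;> rintro ⟨h₁, h₂⟩ <;> constructor <;> linarith
  calc quantileVariance ν (1 - b) (1 - a)
      = Var[Neg.neg; ν[|Neg.neg ⁻¹' qSet ν a b]] := by
        rw [hpre]; exact variance_fun_neg.symm
    _ = Var[id; (ν.map Neg.neg)[|qSet ν a b]] :=
        variance_cond_preimage measurable_neg (isOpen_qSet ν a b).measurableSet
    _ = quantileVariance ν a b := by rw [Measure.map_neg_eq_self]; rfl

section GaussianQuantiles

instance isOpenPosMeasure_gaussianReal (m : ℝ) (v : ℝ≥0) [NeZero v] :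
    (gaussianReal m v).IsOpenPosMeasure :=
  (gaussianReal_absolutelyContinuous' m (NeZero.ne v)).isOpenPosMeasure

instance nullSingletonClass_gaussianReal_of_neZero (m : ℝ) (v : ℝ≥0) [NeZero v] :
    NullSingletonClass (gaussianReal m v) :=
  nullSingletonClass_gaussianReal (NeZero.ne v)

instance isNegInvariant_gaussianReal_zero (v : ℝ≥0) : (gaussianReal 0 v).IsNegInvariant :=
  ⟨gaussianReal_map_neg.trans (by rw [neg_zero])⟩

lemma map_affine_gaussianReal (m : ℝ) (v : ℝ≥0) :
    (gaussianReal 0 1).map (fun x ↦ √(v : ℝ) * x + m) = gaussianReal m v := by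
  have hcomp : (fun x ↦ √(v : ℝ) * x + m) = (· + m) ∘ (√(v : ℝ) * ·) := rfl
  rw [hcomp, ← Measure.map_map (by fun_prop) (by fun_prop), gaussianReal_map_const_mul,
    gaussianReal_map_add_const, mul_zero, zero_add, mul_one]
  congr 1
  exact NNReal.eq (Real.sq_sqrt v.coe_nonneg)

lemma quantileVariance_gaussianReal (m : ℝ) (v : ℝ≥0) [NeZero v] (a b : ℝ) :
    quantileVariance (gaussianReal m v) a b = v * quantileVariance (gaussianReal 0 1) a b := by
  set e : ℝ → ℝ := fun x ↦ √(v : ℝ) * x + m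
  have he : StrictMono e :=
    (strictMono_id.const_mul (Real.sqrt_pos.2 (NNReal.coe_pos.2 (NeZero.pos v)))).add_const m
  have hpre : e ⁻¹' qSet (gaussianReal m v) a b = qSet (gaussianReal 0 1) a b := by
    have hcdf (x : ℝ) : cdf (gaussianReal m v) (e x) = cdf (gaussianReal 0 1) x := by
      rw [← map_affine_gaussianReal m v]
      exact cdf_map_apply_of_strictMono _ he x
    ext x
    simp only [qSet_eq_preimage_cdf, mem_preimage, hcdf]
  calc quantileVariance (gaussianReal m v) a b
      = Var[id; ((gaussianReal 0 1).map e)[|qSet (gaussianReal m v) a b]] := by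
        rw [map_affine_gaussianReal]; rfl
    _ = Var[e; (gaussianReal 0 1)[|qSet (gaussianReal 0 1) a b]] := by
        rw [← variance_cond_preimage he.monotone.measurable (isOpen_qSet _ a b).measurableSet,
          hpre]
    _ = v * quantileVariance (gaussianReal 0 1) a b := by
        obtain hzero | hpos := eq_or_ne (gaussianReal 0 1 (qSet (gaussianReal 0 1) a b)) 0
        · simp [quantileVariance, cond_eq_zero_of_meas_eq_zero hzero]
        · have := cond_isProbabilityMeasure hpos
          rw [variance_add_const (by fun_prop), variance_const_mul, Real.sq_sqrt v.coe_nonneg]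
          rfl

lemma cdf_stdNormalQuantile {p : ℝ} (hp : p ∈ Ioo (0 : ℝ) 1) :
    cdf (gaussianReal 0 1) (stdNormalQuantile p) = p := by
  obtain ⟨x, rfl⟩ := exists_cdf_eq (gaussianReal 0 1) hp
  have hIci : {y | cdf (gaussianReal 0 1) x ≤ cdf (gaussianReal 0 1) y} = Ici x :=
    Set.ext fun _ ↦ (strictMono_cdf _).le_iff_le
  rw [stdNormalQuantile, hIci, csInf_Ici]

lemma qSet_stdNormal_eq_Ioo {p r : ℝ} (hp : p ∈ Ioo (0 : ℝ) 1) (hr : r ∈ Ioo (0 : ℝ) 1) :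
    qSet (gaussianReal 0 1) p r = Ioo (stdNormalQuantile p) (stdNormalQuantile r) := by
  have hmono := strictMono_cdf (gaussianReal 0 1)
  ext y
  rw [qSet_eq_preimage_cdf, mem_preimage, mem_Ioo, mem_Ioo,
    ← hmono.lt_iff_lt (a := stdNormalQuantile p), cdf_stdNormalQuantile hp,
    ← hmono.lt_iff_lt (a := y), cdf_stdNormalQuantile hr]

lemma qSet_stdNormal_zero_eq_Iio {p : ℝ} (hp : p ∈ Ioo (0 : ℝ) 1) :
    qSet (gaussianReal 0 1) 0 p = Iio (stdNormalQuantile p) := by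
  ext y
  rw [qSet_eq_preimage_cdf, mem_preimage, mem_Ioo, mem_Iio,
    ← (strictMono_cdf (gaussianReal 0 1)).lt_iff_lt (a := y), cdf_stdNormalQuantile hp]
  exact and_iff_right (cdf_pos _ y)

end GaussianQuantiles

section LinearForms

variable {Ω ι : Type*} {mΩ : MeasurableSpace Ω} {P : Measure Ω} [Fintype ι] {X : Ω → ι → ℝ}

lemma hasGaussianLaw_of_forall_sum (hX : AEMeasurable X P)
    (h : ∀ c : ι → ℝ, HasGaussianLaw (fun ω ↦ ∑ i, c i * X ω i) P) : HasGaussianLaw X P := by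
  classical
  refine ⟨isGaussian_of_isGaussian_map fun L ↦ ?_⟩
  have hL : L ∘ X = fun ω ↦ ∑ i, L (Pi.single i 1) * X ω i := by
    ext ω
    conv_lhs => rw [Function.comp_apply, pi_eq_sum_univ' (X ω), map_sum]
    simp only [map_smul, smul_eq_mul, mul_comm]
  rw [AEMeasurable.map_map_of_aemeasurable L.continuous.measurable.aemeasurable hX, hL]
  exact (h _).isGaussian_map

lemma hasGaussianLaw_prodMk_sum (hX : HasGaussianLaw X P) (α : ι → ℝ) :
    HasGaussianLaw (fun ω ↦ (X ω, ∑ i, α i * X ω i)) P := by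
  simpa using! hX.map_fun ((ContinuousLinearMap.id ℝ (ι → ℝ)).prod (∑ i, α i • .proj i))

end LinearForms

section QuantileConditioning

variable {Ω E : Type*} {mΩ : MeasurableSpace Ω} {P : Measure Ω} [NormedAddCommGroup E]
  [NormedSpace ℝ E] [MeasurableSpace E] [BorelSpace E] {X : Ω → E} {Y : Ω → ℝ}

lemma covariance_cond_qSet (hXY : HasGaussianLaw (fun ω ↦ (X ω, Y ω)) P) (hY : Measurable Y)
    (hVar : 0 < Var[Y; P]) {a b : ℝ} (ha : 0 ≤ a) (hab : a < b) (hb : b ≤ 1)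
    (L₁ L₂ : StrongDual ℝ E) :
    cov[L₁ ∘ X, L₂ ∘ X; P[|Y ⁻¹' qSet (P.map Y) a b]] = cov[L₁ ∘ X, L₂ ∘ X; P]
      + cov[L₁ ∘ X, Y; P] * cov[L₂ ∘ X, Y; P] / Var[Y; P]
        * (quantileVariance (gaussianReal 0 1) a b - 1) := by
  have : NeZero Var[Y; P].toNNReal := ⟨(Real.toNNReal_pos.2 hVar).ne'⟩
  have hlaw : P.map Y = gaussianReal P[Y] Var[Y; P].toNNReal := hXY.snd.map_eq_gaussianReal
  have hA : MeasurableSet (qSet (P.map Y) a b) := hlaw ▸ (isOpen_qSet _ a b).measurableSet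
  have hPA : P (Y ⁻¹' qSet (P.map Y) a b) ≠ 0 := by
    rw [← Measure.map_apply hY hA, hlaw]
    exact measure_qSet_ne_zero _ ha hab hb
  have hcond : Var[Y; P[|Y ⁻¹' qSet (P.map Y) a b]]
      = Var[Y; P] * quantileVariance (gaussianReal 0 1) a b := by
    rw [variance_cond_preimage hY hA, hlaw, ← quantileVariance,
      quantileVariance_gaussianReal, Real.coe_toNNReal _ hVar.le]
  rw [covariance_cond_preimage_of_hasGaussianLaw hXY hY hVar.ne' hA hPA, hcond]
  field_simp

theorem twenty_sixty_twenty_rule_general (hXY : HasGaussianLaw (fun ω ↦ (X ω, Y ω)) P)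
    (hY : Measurable Y) (hVar : 0 < Var[Y; P]) {q : ℝ} (hq : q ∈ Ioo (0 : ℝ) (1 / 2))
    (hqdef : Var[fun x ↦ x; (gaussianReal 0 1)[|Iio (stdNormalQuantile q)]]
      = Var[fun x ↦ x;
          (gaussianReal 0 1)[|Ioo (stdNormalQuantile q) (stdNormalQuantile (1 - q))]])
    (L₁ L₂ : StrongDual ℝ E) :
    cov[L₁ ∘ X, L₂ ∘ X; P[|Y ⁻¹' qSet (P.map Y) 0 q]]
        = cov[L₁ ∘ X, L₂ ∘ X; P[|Y ⁻¹' qSet (P.map Y) q (1 - q)]]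
      ∧ cov[L₁ ∘ X, L₂ ∘ X; P[|Y ⁻¹' qSet (P.map Y) q (1 - q)]]
        = cov[L₁ ∘ X, L₂ ∘ X; P[|Y ⁻¹' qSet (P.map Y) (1 - q) 1]] := by
  obtain ⟨hq0, hq2⟩ := hq
  have hlower_middle : quantileVariance (gaussianReal 0 1) 0 q
      = quantileVariance (gaussianReal 0 1) q (1 - q) := by
    rw [quantileVariance, quantileVariance, qSet_stdNormal_zero_eq_Iio ⟨hq0, by linarith⟩,
      qSet_stdNormal_eq_Ioo ⟨hq0, by linarith⟩ ⟨by linarith, by linarith⟩]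
    exact hqdef
  have hupper_lower : quantileVariance (gaussianReal 0 1) (1 - q) 1
      = quantileVariance (gaussianReal 0 1) 0 q := by
    simpa only [sub_zero] using quantileVariance_one_sub (gaussianReal 0 1) 0 q
  rw [covariance_cond_qSet hXY hY hVar le_rfl hq0 (by linarith),
    covariance_cond_qSet hXY hY hVar hq0.le (by linarith) (by linarith),
    covariance_cond_qSet hXY hY hVar (by linarith) (by linarith) le_rfl,
    hupper_lower, ← hlower_middle]
  exact ⟨rfl, rfl⟩

end QuantileConditioning

/-- **the 20/60/20 rule.** For `X ~ N_k(μ, Σ)` with non-degenerate benchmark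
`Y = ⟨α, X⟩`, the conditional covariance matrices over the 20/60/20 split
`A₁ = A(0, q̃)`, `A₂ = A(q̃, 1−q̃)`, `A₃ = A(1−q̃, 1)` coincide, where `q̃ ∈ (0, 1/2)` is the
value with `Var[V | V < Φ⁻¹(q̃)] = Var[V | Φ⁻¹(q̃) < V < Φ⁻¹(1−q̃)]` for standard normal `V`. -/
theorem twenty_sixty_twenty_rule
    {Ω : Type*} [MeasureSpace Ω] [IsProbabilityMeasure (ℙ : Measure Ω)]
    (k : ℕ) (X : Ω → Fin k → ℝ) (hXmeas : Measurable X)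
    (μ : Fin k → ℝ) (S : Matrix (Fin k) (Fin k) ℝ)
    (hGauss : ∀ c : Fin k → ℝ,
      (ℙ : Measure Ω).map (fun ω => ∑ i, c i * X ω i)
        = gaussianReal (∑ i, c i * μ i)
            (Real.toNNReal (∑ i, ∑ j, c i * S i j * c j)))
    (α : Fin k → ℝ) (hα : α ≠ 0)
    (Y : Ω → ℝ) (hY : Y = fun ω => ∑ i, α i * X ω i)
    (hVarYpos : 0 < variance Y ℙ)
    (q : ℝ) (hq : q ∈ Set.Ioo (0 : ℝ) (1/2))
    (hqdef : variance (fun x => x) ((gaussianReal 0 1)[|Set.Iio (stdNormalQuantile q)])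
      = variance (fun x => x)
          ((gaussianReal 0 1)[|Set.Ioo (stdNormalQuantile q) (stdNormalQuantile (1 - q))]))
    (A₁ A₂ A₃ : Set ℝ)
    (hA₁ : A₁ = qSet ((ℙ : Measure Ω).map Y) 0 q)
    (hA₂ : A₂ = qSet ((ℙ : Measure Ω).map Y) q (1 - q))
    (hA₃ : A₃ = qSet ((ℙ : Measure Ω).map Y) (1 - q) 1) :
    ∀ i j, covar (ℙ[|Y ⁻¹' A₁]) (fun ω => X ω i) (fun ω => X ω j)
        = covar (ℙ[|Y ⁻¹' A₂]) (fun ω => X ω i) (fun ω => X ω j)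
      ∧ covar (ℙ[|Y ⁻¹' A₂]) (fun ω => X ω i) (fun ω => X ω j)
        = covar (ℙ[|Y ⁻¹' A₃]) (fun ω => X ω i) (fun ω => X ω j) := by
  subst hY hA₁ hA₂ hA₃
  intro i j
  have hX : HasGaussianLaw X ℙ :=
    hasGaussianLaw_of_forall_sum hXmeas.aemeasurable fun c ↦ ⟨hGauss c ▸ inferInstance⟩
  exact twenty_sixty_twenty_rule_general (hasGaussianLaw_prodMk_sum hX α) (by fun_prop) hVarYpos
    hq hqdef (.proj i) (.proj j)
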